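/- Let 2 ≤ k < n and let H₀ ∈ Σ_k. Set r₀ = (λ_{k+1}(H₀) − λ_k(H₀))/2, half the spectral gap. Then the distance in operator 2-norm from H₀ to Σ_{[k,k+1]} equals r₀: for every G ∈ Σ_{[k,k+1]} one has ‖H₀ − G‖₂ ≥ r₀, and there exists G₀ ∈ Σ_{[k,k+1]} with ‖H₀ − G₀‖₂ = r₀. -/

import Mathlib

open Matrix

noncomputable section

/-- Sorted eigenvalues (increasing, counted with multiplicity) of a Hermitian matrix
(junk value for non-Hermitian matrices). -/
def eigs {n : ℕ} (H : Matrix (Fin n) (Fin n) ℂ) : Fin n → ℝ :=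
  if hH : H.IsHermitian then hH.eigenvalues ∘ Tuple.sort hH.eigenvalues else fun _ => 0

/-- Operator 2-norm of a Hermitian matrix: the largest absolute value of an eigenvalue. -/
def op2Norm {n : ℕ} (M : Matrix (Fin n) (Fin n) ℂ) : ℝ :=
  ⨆ i : Fin n, |eigs M i|

/-- The set Σ_k of k-fold ground-state degenerate Hermitian matrices:
λ₁ = … = λ_k < λ_{k+1}. -/
def SigmaSet (n k : ℕ) : Set (Matrix (Fin n) (Fin n) ℂ) :=
  {H | H.IsHermitian ∧ (∀ i j : Fin n, (i : ℕ) < k → (j : ℕ) < k → eigs H i = eigs H j) ∧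
    ∀ i j : Fin n, (i : ℕ) < k → (j : ℕ) = k → eigs H i < eigs H j}

/-- The set Σ_{[k,k+1]} of Hermitian matrices with λ_k = λ_{k+1}. -/
def SigmaPairSet (n k : ℕ) : Set (Matrix (Fin n) (Fin n) ℂ) :=
  {H | H.IsHermitian ∧ ∀ i j : Fin n, (i : ℕ) + 1 = k → (j : ℕ) = k → eigs H i = eigs H j}

/-!
Weyl's perturbation inequality makes the sorted spectrum `1`-Lipschitz for the operator norm, so
closing the gap `λ_j - λ_i` moves one of its two ends by at least half the gap. Conversely, keeping
the eigenvectors of `H` and replacing its sorted spectrum by another increasing sequence `d` costs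
exactly `‖eigs H - d‖` in the sup norm, and the two ends can be merged at their midpoint at cost
half the gap while the sequence stays increasing. Weyl's inequality is itself the monotonicity of
the sorted spectrum in the Loewner order, applied to `A ≤ B + ‖A - B‖ • 1`; and monotonicity holds
because, by a dimension count, some nonzero vector is orthogonal to the eigenvectors of `A` before
the `i`-th and to those of `B` after it.
-/

section WeylPerturbation

open scoped ComplexOrder MatrixOrder Matrix.Norms.L2Operator

lemma exists_ne_zero_forall_lt_forall_gt {K V ι : Type*} [DivisionRing K] [AddCommGroup V]
    [Module K V] [Fintype ι] [LinearOrder ι] (hcard : Fintype.card ι ≤ Module.finrank K V)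
    (f g : V →ₗ[K] ι → K) (i : ι) :
    ∃ x ≠ 0, (∀ j < i, f x j = 0) ∧ ∀ j > i, g x j = 0 := by
  let L : V →ₗ[K] {j // j ≠ i} → K :=
    LinearMap.pi fun j => LinearMap.proj (j : ι) ∘ₗ if j < i then f else g
  have : FiniteDimensional K V :=
    FiniteDimensional.of_finrank_pos ((Fintype.card_pos_iff.2 ⟨i⟩).trans_le hcard)
  have hL : LinearMap.ker L ≠ ⊥ := by
    apply LinearMap.ker_ne_bot_of_finrank_lt
    rw [Module.finrank_fintype_fun_eq_card]
    exact (Fintype.card_subtype_lt (p := (· ≠ i)) (x := i) (by simp)).trans_le hcard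
  obtain ⟨x, hx, hx0⟩ := (Submodule.ne_bot_iff _).1 hL
  have hLx (j : ι) (hj : j ≠ i) : (if j < i then f else g) x j = 0 :=
    congrFun (LinearMap.mem_ker.1 hx) ⟨j, hj⟩
  refine ⟨x, hx0, fun j hj => ?_, fun j hj => ?_⟩
  · simpa only [if_pos hj] using hLx j hj.ne
  · simpa only [if_neg hj.not_gt] using hLx j hj.ne'

section ConjDiagonal

variable {ι 𝕜 : Type*} [Fintype ι] [RCLike 𝕜]

/-- The Hermitian matrix `U * diagonal d * star U`, with the columns of `U` as orthonormal
eigenbasis and `d` as eigenvalues. It is bundled as an algebra homomorphism in `d`, so that matrices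
with a common eigenbasis are added and subtracted through their eigenvalues. -/
def conjDiagonal [DecidableEq ι] (U : unitaryGroup ι 𝕜) : (ι → ℝ) →ₐ[ℝ] Matrix ι ι 𝕜 :=
  (AlgHomClass.toAlgHom (Unitary.conjStarAlgAut ℝ (Matrix ι ι 𝕜) U)).comp
    ((diagonalAlgHom ℝ).comp (RCLike.ofRealAm.compLeft ι))

section DecidableEq

variable [DecidableEq ι]

lemma conjDiagonal_apply (U : unitaryGroup ι 𝕜) (d : ι → ℝ) :
    conjDiagonal U d =
      (U : Matrix ι ι 𝕜) * diagonal (RCLike.ofReal ∘ d) * star (U : Matrix ι ι 𝕜) :=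
  rfl

lemma isHermitian_conjDiagonal (U : unitaryGroup ι 𝕜) (d : ι → ℝ) :
    (conjDiagonal U d).IsHermitian := by
  rw [conjDiagonal_apply]
  refine isHermitian_mul_mul_conjTranspose _ (isHermitian_diagonal_of_self_adjoint _ ?_)
  ext i
  simp

lemma norm_conjDiagonal (U : unitaryGroup ι 𝕜) (d : ι → ℝ) : ‖conjDiagonal U d‖ = ‖d‖ := by
  rw [conjDiagonal_apply, ← Unitary.coe_star, CStarRing.norm_mul_coe_unitary,
    CStarRing.norm_coe_unitary_mul, l2_opNorm_diagonal]
  exact ((algebraMap_isometry ℝ 𝕜).postcomp_pi).norm_map_of_map_zero (by ext; simp) d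

lemma exists_conjDiagonal_comp_perm (U : unitaryGroup ι 𝕜) (d : ι → ℝ) (σ : Equiv.Perm ι) :
    ∃ V : unitaryGroup ι 𝕜, conjDiagonal V (d ∘ σ) = conjDiagonal U d := by
  refine ⟨⟨(U : Matrix ι ι 𝕜).submatrix id σ, mem_unitaryGroup_iff.2 ?_⟩, ?_⟩
  · rw [star_eq_conjTranspose, conjTranspose_submatrix, submatrix_mul_equiv,
      ← star_eq_conjTranspose, submatrix_id_id]
    exact mem_unitaryGroup_iff.1 U.2
  · simp only [conjDiagonal_apply, star_eq_conjTranspose, conjTranspose_submatrix,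
      ← Function.comp_assoc, ← submatrix_diagonal_equiv, submatrix_mul_equiv, submatrix_id_id]

lemma dotProduct_conjDiagonal_mulVec (U : unitaryGroup ι 𝕜) (d : ι → ℝ) (x : ι → 𝕜) :
    star x ⬝ᵥ conjDiagonal U d *ᵥ x
      = ((∑ j, d j * ‖(star (U : Matrix ι ι 𝕜) *ᵥ x) j‖ ^ 2 : ℝ) : 𝕜) := by
  set y := star (U : Matrix ι ι 𝕜) *ᵥ x with hy
  have hyU : star x ᵥ* (U : Matrix ι ι 𝕜) = star y := by
    rw [star_mulVec, star_eq_conjTranspose, conjTranspose_conjTranspose]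
  rw [conjDiagonal_apply, ← mulVec_mulVec, ← mulVec_mulVec, dotProduct_mulVec, hyU,
    ← hy, dotProduct, RCLike.ofReal_sum]
  refine Finset.sum_congr rfl fun j _ => ?_
  rw [Pi.star_apply, mulVec_diagonal, mul_left_comm, RCLike.star_def, RCLike.conj_mul,
    Function.comp_apply, RCLike.ofReal_mul, RCLike.ofReal_pow]

lemma sum_norm_sq_star_mulVec (U : unitaryGroup ι 𝕜) (x : ι → 𝕜) :
    ∑ j, ‖(star (U : Matrix ι ι 𝕜) *ᵥ x) j‖ ^ 2 = ∑ j, ‖x j‖ ^ 2 := by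
  have hU := dotProduct_conjDiagonal_mulVec U 1 x
  have h1 := dotProduct_conjDiagonal_mulVec 1 1 x
  rw [map_one] at hU h1
  simpa using RCLike.ofReal_injective (hU.symm.trans h1)

end DecidableEq

theorem le_of_conjDiagonal_le [LinearOrder ι] {U V : unitaryGroup ι 𝕜} {a b : ι → ℝ}
    (ha : Monotone a) (hb : Monotone b) (hab : conjDiagonal U a ≤ conjDiagonal V b) : a ≤ b := by
  intro i
  obtain ⟨x, hx0, hU, hV⟩ := exists_ne_zero_forall_lt_forall_gt
    (Module.finrank_fintype_fun_eq_card 𝕜).ge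
    (star (U : Matrix ι ι 𝕜)).mulVecLin (star (V : Matrix ι ι 𝕜)).mulVecLin i
  simp only [mulVecLin_apply] at hU hV
  have hyx := sum_norm_sq_star_mulVec U x
  have hzx := sum_norm_sq_star_mulVec V x
  have hquad := (le_iff.1 hab).re_dotProduct_nonneg x
  rw [sub_mulVec, dotProduct_sub, dotProduct_conjDiagonal_mulVec, dotProduct_conjDiagonal_mulVec,
    map_sub, RCLike.ofReal_re, RCLike.ofReal_re, sub_nonneg] at hquad
  set y := star (U : Matrix ι ι 𝕜) *ᵥ x
  set z := star (V : Matrix ι ι 𝕜) *ᵥ x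
  have hpos : 0 < ∑ j, ‖x j‖ ^ 2 := by
    obtain ⟨j, hj⟩ := Function.ne_iff.1 hx0
    exact Finset.sum_pos' (fun _ _ => by positivity)
      ⟨j, Finset.mem_univ j, pow_pos (norm_pos_iff.2 hj) 2⟩
  refine le_of_mul_le_mul_right ?_ hpos
  calc a i * ∑ j, ‖x j‖ ^ 2 = ∑ j, a i * ‖y j‖ ^ 2 := by rw [← hyx, Finset.mul_sum]
    _ ≤ ∑ j, a j * ‖y j‖ ^ 2 := by
        refine Finset.sum_le_sum fun j _ => ?_
        rcases lt_or_ge j i with hji | hij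
        · simp [hU j hji]
        · gcongr
          exact ha hij
    _ ≤ ∑ j, b j * ‖z j‖ ^ 2 := hquad
    _ ≤ ∑ j, b i * ‖z j‖ ^ 2 := by
        refine Finset.sum_le_sum fun j _ => ?_
        rcases lt_or_ge i j with hij | hji
        · simp [hV j hij]
        · gcongr
          exact hb hji
    _ = b i * ∑ j, ‖x j‖ ^ 2 := by rw [← hzx, Finset.mul_sum]

end ConjDiagonal

variable {n : ℕ} {A B H : Matrix (Fin n) (Fin n) ℂ}

lemma monotone_eigs (H : Matrix (Fin n) (Fin n) ℂ) : Monotone (eigs H) := by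
  unfold eigs
  split_ifs
  · exact Tuple.monotone_sort _
  · exact monotone_const

lemma exists_eq_conjDiagonal_eigs (hH : H.IsHermitian) :
    ∃ U : unitaryGroup (Fin n) ℂ, H = conjDiagonal U (eigs H) := by
  obtain ⟨U, hU⟩ := exists_conjDiagonal_comp_perm hH.eigenvectorUnitary hH.eigenvalues
    (Tuple.sort hH.eigenvalues)
  refine ⟨U, hH.spectral_theorem.trans ?_⟩
  rw [eigs, dif_pos hH, hU]
  rfl

lemma eigs_le_eigs (hA : A.IsHermitian) (hAB : A ≤ B) : eigs A ≤ eigs B := by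
  have hB : B.IsHermitian := by simpa using hA.add (le_iff.1 hAB).isHermitian
  obtain ⟨U, hU⟩ := exists_eq_conjDiagonal_eigs hA
  obtain ⟨V, hV⟩ := exists_eq_conjDiagonal_eigs hB
  rw [hU, hV] at hAB
  exact le_of_conjDiagonal_le (monotone_eigs A) (monotone_eigs B) hAB

lemma eigs_conjDiagonal (U : unitaryGroup (Fin n) ℂ) {d : Fin n → ℝ} (hd : Monotone d) :
    eigs (conjDiagonal U d) = d := by
  obtain ⟨V, hV⟩ := exists_eq_conjDiagonal_eigs (isHermitian_conjDiagonal U d)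
  exact le_antisymm (le_of_conjDiagonal_le (monotone_eigs _) hd hV.ge)
    (le_of_conjDiagonal_le hd (monotone_eigs _) hV.le)

lemma eigs_add_algebraMap (hH : H.IsHermitian) (c : ℝ) (i : Fin n) :
    eigs (H + algebraMap ℝ _ c) i = eigs H i + c := by
  obtain ⟨U, hU⟩ := exists_eq_conjDiagonal_eigs hH
  have hHc : H + algebraMap ℝ _ c = conjDiagonal U (eigs H + algebraMap ℝ _ c) := by
    rw [map_add, AlgHom.commutes, ← hU]
  have hmono : Monotone (eigs H + algebraMap ℝ (Fin n → ℝ) c) :=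
    (monotone_eigs H).add monotone_const
  rw [hHc, eigs_conjDiagonal U hmono]
  rfl

lemma op2Norm_eq_norm_eigs (H : Matrix (Fin n) (Fin n) ℂ) : op2Norm H = ‖eigs H‖ := by
  rcases isEmpty_or_nonempty (Fin n) with _ | _
  · rw [op2Norm, Real.iSup_of_isEmpty, Subsingleton.elim (eigs H) 0, norm_zero]
  · exact (IsGreatest.pi_norm (eigs H)).csSup_eq

lemma op2Norm_eq_l2_opNorm (hH : H.IsHermitian) : op2Norm H = ‖H‖ := by
  obtain ⟨U, hU⟩ := exists_eq_conjDiagonal_eigs hH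
  rw [op2Norm_eq_norm_eigs, ← norm_conjDiagonal U, ← hU]

lemma op2Norm_sub_comm (hA : A.IsHermitian) (hB : B.IsHermitian) :
    op2Norm (A - B) = op2Norm (B - A) := by
  rw [op2Norm_eq_l2_opNorm (hA.sub hB), op2Norm_eq_l2_opNorm (hB.sub hA), norm_sub_rev]

theorem eigs_sub_eigs_le_op2Norm_sub (hA : A.IsHermitian) (hB : B.IsHermitian) (i : Fin n) :
    eigs A i - eigs B i ≤ op2Norm (A - B) := by
  rw [op2Norm_eq_l2_opNorm (hA.sub hB), sub_le_iff_le_add', ← eigs_add_algebraMap hB]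
  refine eigs_le_eigs hA ?_ i
  exact sub_le_iff_le_add'.1 (hA.sub hB).isSelfAdjoint.le_algebraMap_norm_self

theorem exists_eigs_eq_and_op2Norm_sub_eq (hH : H.IsHermitian) {d : Fin n → ℝ}
    (hd : Monotone d) :
    ∃ G : Matrix (Fin n) (Fin n) ℂ,
      G.IsHermitian ∧ eigs G = d ∧ op2Norm (H - G) = ‖eigs H - d‖ := by
  obtain ⟨U, hU⟩ := exists_eq_conjDiagonal_eigs hH
  have hG := isHermitian_conjDiagonal U d
  refine ⟨conjDiagonal U d, hG, eigs_conjDiagonal U hd, ?_⟩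
  rw [op2Norm_eq_l2_opNorm (hH.sub hG), ← norm_conjDiagonal U, map_sub, ← hU]

end WeylPerturbation

lemma exists_monotone_apply_eq_and_norm_sub_eq {ι : Type*} [Fintype ι] [Preorder ι] {a : ι → ℝ}
    (ha : Monotone a) {i j : ι} (hij : i ≤ j) :
    ∃ d : ι → ℝ, Monotone d ∧ d i = d j ∧ ‖a - d‖ = (a j - a i) / 2 := by
  set m := (a i + a j) / 2 with hm
  set r := (a j - a i) / 2 with hr
  have hr0 : 0 ≤ r := div_nonneg (sub_nonneg.2 (ha hij)) zero_le_two
  -- `d l` is the point of `[a l - r, a l + r]` nearest to the midpoint `m`.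
  let d : ι → ℝ := fun l => max (min (a l + r) m) (a l - r)
  have hdi : d i = m := by grind
  have hdj : d j = m := by grind
  refine ⟨d, ?_, hdi.trans hdj.symm, le_antisymm ?_ ?_⟩
  · exact ((ha.add_const r).min monotone_const).max fun _ _ h => sub_le_sub_right (ha h) r
  · refine (pi_norm_le_iff_of_nonneg hr0).2 fun l => abs_le.2 ⟨?_, ?_⟩ <;>
      simp only [Pi.sub_apply] <;> grind
  · have hjm : a j - m = r := by rw [hm, hr]; ring
    calc r = ‖(a - d) j‖ := by rw [Pi.sub_apply, hdj, hjm, Real.norm_of_nonneg hr0]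
      _ ≤ ‖a - d‖ := norm_le_pi_norm _ j

theorem op2_dist_to_SigmaPair_general {n : ℕ} {i j : Fin n} (hij : i ≤ j)
    {H : Matrix (Fin n) (Fin n) ℂ} (hH : H.IsHermitian) :
    (∀ G ∈ {G : Matrix (Fin n) (Fin n) ℂ | G.IsHermitian ∧ eigs G i = eigs G j},
      (eigs H j - eigs H i) / 2 ≤ op2Norm (H - G)) ∧
    ∃ G ∈ {G : Matrix (Fin n) (Fin n) ℂ | G.IsHermitian ∧ eigs G i = eigs G j},
      op2Norm (H - G) = (eigs H j - eigs H i) / 2 := by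
  constructor
  · rintro G ⟨hG, hGij⟩
    have hj := eigs_sub_eigs_le_op2Norm_sub hH hG j
    have hi := eigs_sub_eigs_le_op2Norm_sub hG hH i
    rw [op2Norm_sub_comm hG hH] at hi
    linarith
  · obtain ⟨d, hd, hdij, hnorm⟩ := exists_monotone_apply_eq_and_norm_sub_eq (monotone_eigs H) hij
    obtain ⟨G, hG, rfl, hHG⟩ := exists_eigs_eq_and_op2Norm_sub_eq hH hd
    exact ⟨G, ⟨hG, hdij⟩, hHG.trans hnorm⟩

lemma SigmaPairSet_eq_setOf {n k : ℕ} (hk : 0 < k) (hkn : k < n) :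
    SigmaPairSet n k = {G | G.IsHermitian ∧ eigs G ⟨k - 1, by omega⟩ = eigs G ⟨k, hkn⟩} := by
  ext G
  refine and_congr_right fun _ => ⟨fun h => h _ _ (Nat.sub_add_cancel hk) rfl, ?_⟩
  rintro h ⟨_, _⟩ ⟨_, _⟩ rfl rfl
  exact h

/-- **The operator-2-norm distance from `H₀ ∈ Σ_k` to `Σ_{[k,k+1]}` is half the spectral gap**
`r₀ = (λ_{k+1}(H₀) − λ_k(H₀))/2`: every `G ∈ Σ_{[k,k+1]}` satisfies `‖H₀ − G‖₂ ≥ r₀`, and some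
`G₀ ∈ Σ_{[k,k+1]}` attains `‖H₀ − G₀‖₂ = r₀`. -/
theorem op2_dist_to_SigmaPair {n k : ℕ} (hk2 : 2 ≤ k) (hkn : k < n)
    (H₀ : Matrix (Fin n) (Fin n) ℂ) (h₀ : H₀ ∈ SigmaSet n k) :
    (∀ G ∈ SigmaPairSet n k,
      (eigs H₀ ⟨k, hkn⟩ - eigs H₀ ⟨k - 1, by omega⟩) / 2 ≤ op2Norm (H₀ - G)) ∧
    ∃ G₀ ∈ SigmaPairSet n k,
      op2Norm (H₀ - G₀) = (eigs H₀ ⟨k, hkn⟩ - eigs H₀ ⟨k - 1, by omega⟩) / 2 :=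
  SigmaPairSet_eq_setOf (by omega) hkn ▸ op2_dist_to_SigmaPair_general (by simp) h₀.1

end
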